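/- Injectivity from boundary injectivity for conformal maps of the disc (Darboux–Picard form of Lemma 2). Let f : ℂ → ℂ be continuous on the closed unit disc {z : |z| ≤ 1} and complex-differentiable (holomorphic) at every point of the open unit disc {z : |z| < 1}. Then f is injective on the closed unit disc if and only if f is injective on the unit circle {z : |z| = 1}. -/

import Mathlib

open Complex Metric Set

/-!
Let `U` be a bounded open set whose frontier is a Jordan curve and `f` a map that is holomorphic on
`U`, continuous on `closure U` and injective on `frontier U`. By the open mapping theorem `f '' U`
is open.

*No point of the frontier shares its value with a point of `U`.* Suppose `f w ∈ f '' U` with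
`w ∈ frontier U`. The frontier of `f '' U` is the image of a compact part of the Jordan arc
`frontier U \ {w}`. On this arc `f - f w` has a continuous logarithm, and by injectivity of `f` this
gives a continuous logarithm of `q - f w` on the frontier of the bounded neighbourhood `f '' U` of
`f w`, which cannot exist.

*The maximum principle on the fibre product.* If `f` is not injective on `closure U`, choose `z ≠ w`
with `f z = f w` and `z - w = c` of maximal length. By the first part all such pairs lie in `U`.
Some pair with the same difference `c` is an isolated solution of `f x = f (x - c)`. By Hurwitz's
theorem it deforms to a solution of `f x = f (x - s)` for every `s` near `c`, in particular for some
longer `s`, a contradiction.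
-/

open Bornology Filter Topology

section Logarithm

theorem not_continuousOn_of_exp_eq_sub_on_sphere {G : ℂ → ℂ} {p : ℂ} {R : ℝ} (hR : 0 < R)
    (hG : ∀ q ∈ sphere p R, exp (G q) = q - p) : ¬ ContinuousOn G (sphere p R) := by
  intro hc
  let g : ℝ → ℂ := fun t => G (circleMap p R t) - t * I
  have hg : Continuous g :=
    (hc.comp_continuous (continuous_circleMap p R) (circleMap_mem_sphere p hR.le)).sub
      (by fun_prop)
  have hexp : ∀ t, exp (g t) = R := fun t => by
    rw [exp_sub, hG _ (circleMap_mem_sphere p hR.le t), circleMap_sub_center, circleMap_zero,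
      mul_div_cancel_right₀ _ (exp_ne_zero _)]
  have hconst : g 0 = g (2 * Real.pi) :=
    isCoveringMap_exp.const_of_comp hg (fun t t' => Subtype.ext (by simp only [hexp])) _ _
  have hperiod : circleMap p R (2 * Real.pi) = circleMap p R 0 := by simp [circleMap]
  have hzero : 2 * Real.pi * I = 0 := by
    simp only [g, hperiod] at hconst
    push_cast at hconst
    linear_combination hconst
  exact two_pi_I_ne_zero hzero

theorem isSimplyConnected_univ {X : Type*} [TopologicalSpace X] [SimplyConnectedSpace X] :
    IsSimplyConnected (univ : Set X) :=
  (Homeomorph.Set.univ X).toHomotopyEquiv.simplyConnectedSpace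

-- Extended to `ℂ` by `q - p` outside `V`, the function `exp ∘ L` would have no zeros, hence a
-- continuous logarithm.
theorem not_continuous_of_exp_eq_sub_on_frontier {V : Set ℂ} (hb : IsBounded V) {p : ℂ}
    (hp : p ∈ interior V) {L : ℂ → ℂ} (hL : ∀ q ∈ frontier V, exp (L q) = q - p) :
    ¬ Continuous L := by
  classical
  intro hc
  let H : ℂ → ℂ := V.piecewise (fun q => exp (L q)) (fun q => q - p)
  have hH : Continuous H := Continuous.piecewise hL (by fun_prop) (by fun_prop)
  have hH0 : 0 ∉ H '' univ := by
    rintro ⟨q, -, hq⟩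
    by_cases hqV : q ∈ V
    · simp [H, hqV] at hq
    · simp only [H, hqV, not_false_eq_true, piecewise_eq_of_notMem, sub_eq_zero] at hq
      exact hqV (hq ▸ interior_subset hp)
  obtain ⟨G, hG, hexp⟩ := exists_continuousOn_eqOn_exp_comp isSimplyConnected_univ isOpen_univ
    hH.continuousOn hH0
  obtain ⟨R, hR, hVR⟩ := hb.subset_ball_lt 0 p
  refine not_continuousOn_of_exp_eq_sub_on_sphere (p := p) hR (fun q hq => ?_)
    (hG.mono (subset_univ _))
  have hqV : q ∉ V := fun h => (mem_ball.1 (hVR h)).ne hq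
  simpa [H, hqV] using hexp (mem_univ q)

theorem disjoint_image_image_frontier {X : Type*} [TopologicalSpace X] {f : X → ℂ} {U : Set X}
    [LocallyPathConnectedSpace (frontier U)]
    (hsc : ∀ w : frontier U, IsSimplyConnected ({w}ᶜ : Set (frontier U)))
    (hU : IsOpen U) (hK : IsCompact (closure U)) (hf : ContinuousOn f (closure U))
    (hinj : InjOn f (frontier U)) (hfU : IsOpen (f '' U)) :
    Disjoint (f '' U) (f '' frontier U) := by
  rw [disjoint_right]
  rintro _ ⟨w, hw, rfl⟩ hwU
  have : CompactSpace (frontier U) :=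
    isCompact_iff_compactSpace.1 (hK.of_isClosed_subset isClosed_frontier frontier_subset_closure)
  let γ : frontier U → ℂ := (frontier U).domRestrict f
  have hγ : Continuous γ := (hf.mono frontier_subset_closure).domRestrict
  have hγinj : Function.Injective γ := injOn_iff_injective.1 hinj
  have : T2Space (frontier U) := .of_injective_continuous hγinj hγ
  obtain ⟨l, hl, hexp⟩ := exists_continuousOn_eqOn_exp_comp (g := fun a => γ a - f w)
    (hsc ⟨w, hw⟩) isOpen_compl_singleton (by fun_prop)
    fun ⟨a, ha, ha0⟩ => ha (hγinj (sub_eq_zero.1 ha0))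
  let A : Set (frontier U) := γ ⁻¹' (f '' U)ᶜ
  have hA : IsClosed A := hfU.isClosed_compl.preimage hγ
  have hAw : A ⊆ {⟨w, hw⟩}ᶜ := by
    rintro _ ha rfl
    exact ha hwU
  have hemb : IsClosedEmbedding (A.domRestrict γ) :=
    (hγ.isClosedEmbedding hγinj).comp hA.isClosedEmbedding_subtypeVal
  obtain ⟨L, hL⟩ :=
    ContinuousMap.exists_extension' hemb ⟨A.domRestrict l, (hl.mono hAw).domRestrict⟩
  have hfK : IsCompact (f '' closure U) := hK.image_of_continuousOn hf
  have hfUK : f '' U ⊆ f '' closure U := image_mono subset_closure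
  refine not_continuous_of_exp_eq_sub_on_frontier (hfK.isBounded.subset hfUK)
    (hfU.interior_eq.symm ▸ hwU) (fun q hq => ?_) L.continuous
  rw [hfU.frontier_eq] at hq
  obtain ⟨a, ha, rfl⟩ := closure_minimal hfUK hfK.isClosed hq.1
  have haU : a ∈ frontier U := by
    rw [hU.frontier_eq]
    exact ⟨ha, fun h => hq.2 (mem_image_of_mem f h)⟩
  have hLa : L (f a) = l ⟨a, haU⟩ := congrFun hL ⟨⟨a, haU⟩, hq.2⟩
  rw [hLa]
  exact hexp (hAw (a := ⟨a, haU⟩) hq.2)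

end Logarithm

section Sphere

variable {E : Type*} [NormedAddCommGroup E] [InnerProductSpace ℝ E]

theorem isSimplyConnected_compl_singleton_sphere (v : sphere (0 : E) 1) :
    IsSimplyConnected ({v}ᶜ) := by
  have hv : ‖(v : E)‖ = 1 := norm_eq_of_mem_sphere v
  rw [← range_stereographic_symm hv v.2, ← image_univ,
    (isOpenEmbedding_stereographic_symm hv).isEmbedding.isSimplyConnected_image]
  exact isSimplyConnected_univ

theorem isSimplyConnected_compl_singleton_of_homeomorph_sphere {X : Type*} [TopologicalSpace X]
    (e : X ≃ₜ sphere (0 : E) 1) (w : X) : IsSimplyConnected ({w}ᶜ) := by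
  rw [← e.isSimplyConnected_image, image_compl_eq e.bijective, image_singleton]
  exact isSimplyConnected_compl_singleton_sphere (e w)

theorem locallyPathConnectedSpace_sphere (n : ℕ) [Fact (Module.finrank ℝ E = n + 1)] :
    LocallyPathConnectedSpace (sphere (0 : E) 1) :=
  ChartedSpace.locallyPathConnectedSpace (EuclideanSpace ℝ (Fin n)) _

end Sphere

section OpenImage

theorem frontier_sdiff_singleton_nonempty {E : Type*} [NormedAddCommGroup E] [NormedSpace ℝ E]
    (hrank : 1 < Module.rank ℝ E) {s : Set E} (hs : IsOpen s) (hb : IsBounded s)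
    (hne : s.Nonempty) (p : E) : (frontier s \ {p}).Nonempty := by
  have : Nontrivial E := (rank_pos_iff_nontrivial (R := ℝ)).1 (zero_lt_one.trans hrank)
  have : (𝓝[≠] p).NeBot := Module.punctured_nhds_neBot ℝ E p
  rw [sdiff_nonempty, hs.frontier_eq]
  intro hsub
  have hconn : IsPreconnected ({p}ᶜ : Set E) :=
    (isConnected_compl_singleton_of_one_lt_rank hrank p).isPreconnected
  have hmeet : ({p}ᶜ ∩ s).Nonempty := by
    rw [inter_comm]
    exact (dense_compl_singleton p).inter_open_nonempty s hs hne
  have hcompl : {p}ᶜ ⊆ s := hconn.subset_of_closure_inter_subset hs hmeet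
    fun x ⟨hx, hxp⟩ => by_contra fun hxs => hxp (hsub ⟨hx, hxs⟩)
  refine NormedSpace.unbounded_univ ℝ E ?_
  rw [← compl_union_self {p}]
  exact (hb.subset hcompl).union isBounded_singleton

variable {f : ℂ → ℂ} {U : Set ℂ}

theorem frontier_setOf_eventually_eq_subset (hU : IsOpen U) (hf : DifferentiableOn ℂ f U) (q : ℂ) :
    frontier {z ∈ U | ∀ᶠ x in 𝓝 z, f x = q} ⊆ frontier U := by
  intro x hx
  have hZ : IsOpen {z ∈ U | ∀ᶠ x in 𝓝 z, f x = q} := hU.inter isOpen_setOfPred_eventually_nhds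
  rw [hZ.frontier_eq] at hx
  rw [hU.frontier_eq]
  refine ⟨closure_mono (sep_subset _ _) hx.1, fun hxU => hx.2 ⟨hxU, ?_⟩⟩
  have han : AnalyticAt ℂ f x := hf.analyticAt (hU.mem_nhds hxU)
  refine (han.eventually_eq_or_eventually_ne analyticAt_const).resolve_right fun hne => ?_
  obtain ⟨y, hy, hyne⟩ := ((mem_closure_iff_frequently.1 hx.1).and_eventually
    (eventually_nhdsWithin_iff.1 hne)).exists
  have hyx : y ≠ x := fun h => hx.2 (h ▸ hy)
  exact hyne hyx hy.2.self_of_nhds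

theorem not_eventually_eq_of_injOn_frontier (hU : IsOpen U) (hb : IsBounded U)
    (hf : DiffContOnCl ℂ f U) (hinj : InjOn f (frontier U)) {z : ℂ} (hz : z ∈ U) (q : ℂ) :
    ¬ ∀ᶠ x in 𝓝 z, f x = q := by
  intro hzq
  let Z : Set ℂ := {z ∈ U | ∀ᶠ x in 𝓝 z, f x = q}
  have hZU : Z ⊆ U := sep_subset _ _
  have hZ : IsOpen Z := hU.inter isOpen_setOfPred_eventually_nhds
  have hfZ : EqOn f (fun _ => q) (closure Z) :=
    EqOn.of_subset_closure (s := Z) (fun x hx => hx.2.self_of_nhds)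
      (hf.continuousOn.mono (closure_mono hZU)) continuousOn_const subset_closure subset_rfl
  have hfr : frontier Z ⊆ frontier U :=
    frontier_setOf_eventually_eq_subset hU hf.differentiableOn q
  have hZfr : ∀ p, (frontier Z \ {p}).Nonempty :=
    frontier_sdiff_singleton_nonempty (by simp) hZ (hb.subset hZU) ⟨z, hz, hzq⟩
  obtain ⟨x, hx, -⟩ := hZfr 0
  obtain ⟨y, hy, hyx⟩ := hZfr x
  exact hyx (hinj (hfr hy) (hfr hx)
    ((hfZ (frontier_subset_closure hy)).trans (hfZ (frontier_subset_closure hx)).symm))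

theorem isOpen_image_of_injOn_frontier (hU : IsOpen U) (hb : IsBounded U)
    (hf : DiffContOnCl ℂ f U) (hinj : InjOn f (frontier U)) : IsOpen (f '' U) := by
  rw [isOpen_iff_mem_nhds]
  rintro _ ⟨z, hz, rfl⟩
  have hUz : U ∈ 𝓝 z := hU.mem_nhds hz
  have hopen : 𝓝 (f z) ≤ map f (𝓝 z) :=
    (hf.differentiableOn.analyticAt hUz).eventually_constant_or_nhds_le_map_nhds.resolve_left
      (not_eventually_eq_of_injOn_frontier hU hb hf hinj hz _)
  exact hopen (image_mem_map hUz)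

end OpenImage

section Hurwitz

theorem exists_eq_zero_of_norm_lt_on_sphere {g : ℂ → ℂ} {z : ℂ} {r : ℝ} (hr : 0 < r)
    (hg : DiffContOnCl ℂ g (ball z r)) (hlt : ∀ x ∈ sphere z r, ‖g z‖ < ‖g x‖) :
    ∃ x ∈ ball z r, g x = 0 := by
  by_contra! hne
  have hne' : ∀ x ∈ closure (ball z r), g x ≠ 0 := by
    rw [closure_ball z hr.ne', ← ball_union_sphere]
    rintro x (hx | hx)
    · exact hne x hx
    · exact norm_pos_iff.1 ((norm_nonneg _).trans_lt (hlt x hx))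
  obtain ⟨x, hx, hmax⟩ := exists_mem_frontier_isMaxOn_norm isBounded_ball
    ⟨z, mem_ball_self hr⟩ (hg.inv hne')
  have hinv : ‖g z‖⁻¹ ≤ ‖g x‖⁻¹ := by simpa using hmax (subset_closure (mem_ball_self hr))
  rw [frontier_ball z hr.ne'] at hx
  have hgz : 0 < ‖g z‖ := norm_pos_iff.2 (hne z (mem_ball_self hr))
  exact (hlt x hx).not_ge ((inv_le_inv₀ hgz (hgz.trans (hlt x hx))).1 hinv)

theorem hurwitz_eventually_exists_eq_zero {P : Type*} [TopologicalSpace P] {F : P × ℂ → ℂ}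
    {Ω : Set (P × ℂ)} (hΩ : IsOpen Ω) (hF : ContinuousOn F Ω)
    (hd : ∀ p ∈ Ω, DifferentiableAt ℂ (fun x => F (p.1, x)) p.2) {c : P} {z : ℂ}
    (hcz : (c, z) ∈ Ω) (h0 : F (c, z) = 0) (hne : ∀ᶠ x in 𝓝[≠] z, F (c, x) ≠ 0) :
    ∀ᶠ s in 𝓝 c, ∃ x, (s, x) ∈ Ω ∧ F (s, x) = 0 := by
  have hcont : ∀ p ∈ Ω, ContinuousAt F p := fun p hp => hF.continuousAt (hΩ.mem_nhds hp)
  have hslice : ∀ᶠ x in 𝓝 z, (c, x) ∈ Ω :=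
    (Continuous.prodMk_right c).continuousAt.eventually (hΩ.mem_nhds hcz)
  obtain ⟨r, hr, hball⟩ := nhds_basis_closedBall.eventually_iff.1
    (hslice.and (eventually_nhdsWithin_iff.1 hne))
  have hΩs : ∀ᶠ s in 𝓝 c, ∀ x ∈ closedBall z r, (s, x) ∈ Ω :=
    (isCompact_closedBall z r).eventually_forall_of_forall_eventually
      fun x hx => hΩ.mem_nhds (hball hx).1
  have hlt : ∀ᶠ s in 𝓝 c, ∀ x ∈ sphere z r, ‖F (s, z)‖ < ‖F (s, x)‖ := by
    refine (isCompact_sphere z r).eventually_forall_of_forall_eventually fun x hx => ?_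
    have hcx := hball (sphere_subset_closedBall hx)
    have hcentre : ContinuousAt (fun p : P × ℂ => F (p.1, z)) (c, x) :=
      (hcont _ hcz).comp (f := fun p : P × ℂ => (p.1, z)) (by fun_prop)
    refine hcentre.norm.eventually_lt (hcont _ hcx.1).norm ?_
    simpa [h0] using hcx.2 (ne_of_mem_sphere hx hr.ne')
  filter_upwards [hΩs, hlt] with s hs hlts
  have hdiff : DiffContOnCl ℂ (fun x => F (s, x)) (ball z r) :=
    DifferentiableOn.diffContOnCl_ball (U := closedBall z r)
      (fun x hx => (hd _ (hs x hx)).differentiableWithinAt) subset_rfl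
  obtain ⟨x, hx, hx0⟩ := exists_eq_zero_of_norm_lt_on_sphere hr hdiff hlts
  exact ⟨x, hs x (ball_subset_closedBall hx), hx0⟩

end Hurwitz

section Displacement

theorem exists_maximal_dist_of_not_injOn {X Y : Type*} [MetricSpace X] [TopologicalSpace Y]
    [T2Space Y] {f : X → Y} {K : Set X} (hK : IsCompact K) (hf : ContinuousOn f K)
    (hinj : ¬ InjOn f K) :
    ∃ z ∈ K, ∃ w ∈ K, z ≠ w ∧ f z = f w ∧ ∀ x ∈ K, ∀ y ∈ K, f x = f y → dist x y ≤ dist z w := by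
  obtain ⟨a, ha, b, hb, hab, hne⟩ : ∃ a ∈ K, ∃ b ∈ K, f a = f b ∧ a ≠ b := by
    simpa [InjOn] using hinj
  let P : Set (X × X) := {p | p ∈ K ×ˢ K ∧ f p.1 = f p.2}
  have hP : IsCompact P := by
    refine (hK.prod hK).of_isClosed_subset ?_ fun p hp => hp.1
    have hff : ContinuousOn (fun p : X × X => (f p.1, f p.2)) (K ×ˢ K) := hf.prodMap hf
    exact hff.preimage_isClosed_of_isClosed (hK.prod hK).isClosed isClosed_diagonal
  obtain ⟨⟨z, w⟩, ⟨⟨hz, hw⟩, hzw⟩, hmax⟩ :=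
    hP.exists_isMaxOn (f := fun p => dist p.1 p.2) ⟨(a, b), ⟨ha, hb⟩, hab⟩ (by fun_prop)
  have hle : ∀ x ∈ K, ∀ y ∈ K, f x = f y → dist x y ≤ dist z w :=
    fun x hx y hy hxy => hmax (a := (x, y)) ⟨⟨hx, hy⟩, hxy⟩
  exact ⟨z, hz, w, hw, dist_pos.1 ((dist_pos.2 hne).trans_le (hle a ha b hb hab)), hzw, hle⟩

theorem frequently_norm_lt_norm {E : Type*} [NormedAddCommGroup E] [NormedSpace ℝ E] {c : E}
    (hc : c ≠ 0) : ∃ᶠ s in 𝓝 c, ‖c‖ < ‖s‖ := by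
  intro hle
  have hball : closedBall (0 : E) ‖c‖ ∈ 𝓝 c := by
    filter_upwards [hle] with s hs using by simpa using hs
  rw [← mem_interior_iff_mem_nhds, interior_closedBall _ (norm_ne_zero_iff.2 hc)] at hball
  simp at hball

variable {f : ℂ → ℂ} {U : Set ℂ}

theorem eventually_exists_eq_comp_sub (hU : IsOpen U) (hf : DifferentiableOn ℂ f U) {z c : ℂ}
    (hz : z ∈ U) (hzc : z - c ∈ U) (hfz : f z = f (z - c))
    (hne : ∀ᶠ x in 𝓝[≠] z, f x ≠ f (x - c)) :
    ∀ᶠ s in 𝓝 c, ∃ x ∈ U, x - s ∈ U ∧ f x = f (x - s) := by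
  let Ω : Set (ℂ × ℂ) := {p | p.2 ∈ U ∧ p.2 - p.1 ∈ U}
  have hΩ : IsOpen Ω := (hU.preimage continuous_snd).inter (hU.preimage (by fun_prop))
  have hF : ContinuousOn (fun p : ℂ × ℂ => f p.2 - f (p.2 - p.1)) Ω :=
    (hf.continuousOn.comp continuousOn_snd fun p hp => hp.1).sub
      (hf.continuousOn.comp (by fun_prop) fun p hp => hp.2)
  have hd : ∀ x ∈ U, DifferentiableAt ℂ f x := fun x hx => hf.differentiableAt (hU.mem_nhds hx)
  have hzero := hurwitz_eventually_exists_eq_zero hΩ hF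
    (fun p hp => (hd _ hp.1).fun_sub (differentiableAt_comp_sub_const.2 (hd _ hp.2)))
    (c := c) (z := z) ⟨hz, hzc⟩ (sub_eq_zero.2 hfz) (by simpa only [ne_eq, sub_eq_zero] using hne)
  simpa only [Ω, mem_ofPred_eq, sub_eq_zero, and_assoc] using hzero

-- A frontier point of the compact set of all solutions is isolated: by the identity principle, a
-- non-isolated solution in the interior of the domain is an interior point of the solution set.
theorem exists_isolated_eq_comp_sub (hU : IsOpen U) (hb : IsBounded U) (hf : DiffContOnCl ℂ f U)
    {c z : ℂ} (hz : z ∈ closure U) (hzc : z - c ∈ closure U) (hfz : f z = f (z - c))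
    (hint : ∀ x ∈ closure U, x - c ∈ closure U → f x = f (x - c) → x ∈ U ∧ x - c ∈ U) :
    ∃ x ∈ U, x - c ∈ U ∧ f x = f (x - c) ∧ ∀ᶠ y in 𝓝[≠] x, f y ≠ f (y - c) := by
  let D : Set ℂ := {x | x ∈ closure U ∧ x - c ∈ closure U}
  let Z : Set ℂ := {x | x ∈ D ∧ f x = f (x - c)}
  have hZcl : IsClosed Z := by
    have hD : IsClosed D := isClosed_closure.inter (isClosed_closure.preimage (by fun_prop))
    have hff : ContinuousOn (fun x => (f x, f (x - c))) D :=
      (hf.continuousOn.mono fun x hx => hx.1).prodMk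
        (hf.continuousOn.comp (by fun_prop) fun x hx => hx.2)
    exact hff.preimage_isClosed_of_isClosed hD isClosed_diagonal
  have hZne : Z ≠ univ :=
    (hb.isCompact_closure.of_isClosed_subset hZcl fun x hx => hx.1.1).ne_univ
  obtain ⟨x, hx⟩ : (frontier Z).Nonempty := nonempty_frontier_iff.2 ⟨⟨z, ⟨hz, hzc⟩, hfz⟩, hZne⟩
  obtain ⟨⟨hxcl, hxccl⟩, hfx⟩ := hZcl.frontier_subset hx
  obtain ⟨hxU, hxcU⟩ := hint x hxcl hxccl hfx
  have hUx : U ∈ 𝓝 x := hU.mem_nhds hxU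
  have hUxc : U ∈ 𝓝 (x - c) := hU.mem_nhds hxcU
  have hfan : AnalyticAt ℂ f x := hf.differentiableOn.analyticAt hUx
  have hsan : AnalyticAt ℂ (fun y => f (y - c)) x :=
    (hf.differentiableOn.analyticAt hUxc).fun_comp (f := fun y => y - c) (by fun_prop)
  refine ⟨x, hxU, hxcU, hfx, (hfan.eventually_eq_or_eventually_ne hsan).resolve_left fun heq => ?_⟩
  refine hx.2 (mem_interior_iff_mem_nhds.2 ?_)
  filter_upwards [heq, hUx, (continuous_sub_right c).continuousAt.eventually hUxc]
    with y hy hyU hycU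
  exact ⟨⟨subset_closure hyU, subset_closure hycU⟩, hy⟩

theorem injOn_closure_of_disjoint_image_frontier (hU : IsOpen U) (hb : IsBounded U)
    (hf : DiffContOnCl ℂ f U) (hinj : InjOn f (frontier U))
    (hdisj : Disjoint (f '' U) (f '' frontier U)) : InjOn f (closure U) := by
  have hint : ∀ x ∈ closure U, ∀ y ∈ closure U, x ≠ y → f x = f y → x ∈ U ∧ y ∈ U := by
    rw [closure_eq_self_union_frontier]
    rintro x (hx | hx) y (hy | hy) hne hxy
    · exact ⟨hx, hy⟩
    · exact (disjoint_left.1 hdisj ⟨x, hx, hxy⟩ ⟨y, hy, rfl⟩).elim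
    · exact (disjoint_left.1 hdisj ⟨y, hy, hxy.symm⟩ ⟨x, hx, rfl⟩).elim
    · exact (hne (hinj hx hy hxy)).elim
  by_contra hcon
  obtain ⟨z, hz, w, hw, hzw, hfzw, hmax⟩ :=
    exists_maximal_dist_of_not_injOn hb.isCompact_closure hf.continuousOn hcon
  obtain ⟨c, rfl⟩ : ∃ c, w = z - c := ⟨z - w, by ring⟩
  have hc : c ≠ 0 := by
    rintro rfl
    simp at hzw
  obtain ⟨x, hx, hxc, hfx, hisol⟩ := exists_isolated_eq_comp_sub hU hb hf hz hw hfzw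
    fun x hx hxc => hint x hx _ hxc fun h => hc (sub_eq_self.1 h.symm)
  obtain ⟨s, hs, y, hy, hys, hfy⟩ := ((frequently_norm_lt_norm hc).and_eventually
    (eventually_exists_eq_comp_sub hU hf.differentiableOn hx hxc hfx hisol)).exists
  have hle : ‖s‖ ≤ ‖c‖ := by
    simpa only [dist_self_sub_right] using hmax y (subset_closure hy) _ (subset_closure hys) hfy
  exact hs.not_ge hle

end Displacement

theorem injOn_closedBall_iff_injOn_sphere_general {f : ℂ → ℂ} {U : Set ℂ} (hU : IsOpen U)
    (hb : IsBounded U) (e : frontier U ≃ₜ sphere (0 : ℂ) 1) (hf : DiffContOnCl ℂ f U) :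
    InjOn f (closure U) ↔ InjOn f (frontier U) := by
  refine ⟨fun h => h.mono frontier_subset_closure, fun hinj => ?_⟩
  have : Fact (Module.finrank ℝ ℂ = 1 + 1) := finrank_real_complex_fact
  have : LocallyPathConnectedSpace (sphere (0 : ℂ) 1) := locallyPathConnectedSpace_sphere 1
  have : LocallyPathConnectedSpace (frontier U) := e.isOpenEmbedding.locallyPathConnectedSpace
  have hdisj : Disjoint (f '' U) (f '' frontier U) :=
    disjoint_image_image_frontier (isSimplyConnected_compl_singleton_of_homeomorph_sphere e) hU
      hb.isCompact_closure hf.continuousOn hinj (isOpen_image_of_injOn_frontier hU hb hf hinj)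
  exact injOn_closure_of_disjoint_image_frontier hU hb hf hinj hdisj

/-- **Darboux–Picard:** a map continuous on the closed unit disc and holomorphic on the
open unit disc is injective on the closed disc iff it is injective on the unit circle. -/
theorem injOn_closedBall_iff_injOn_sphere (f : ℂ → ℂ)
    (hc : ContinuousOn f (closedBall (0 : ℂ) 1))
    (hd : ∀ z ∈ ball (0 : ℂ) 1, DifferentiableAt ℂ f z) :
    Set.InjOn f (closedBall (0 : ℂ) 1) ↔ Set.InjOn f (sphere (0 : ℂ) 1) := by
  rw [← closure_ball 0 one_ne_zero] at hc ⊢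
  simpa only [frontier_ball (0 : ℂ) one_ne_zero] using injOn_closedBall_iff_injOn_sphere_general
    isOpen_ball isBounded_ball (.setCongr (frontier_ball 0 one_ne_zero))
    ⟨fun z hz => (hd z hz).differentiableWithinAt, hc⟩
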